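/- arXiv:1202.2891 — 2 statements merged into one kernel-verified Lean document; each statement's English description precedes it below -/
import Mathlib

section
/- Let k be a finite field with q elements and K an algebraic closure of k. Let M be a free ℤ-module of finite rank with a ℤ-linear automorphism φ, and suppose M decomposes as a finite direct sum M = ⊕ᵢ Mᵢ of φ-invariant submodules such that each (Mᵢ, φ|_{Mᵢ}) is principal with generator χᵢ. Let fᵢ ∈ ℤ[x] be the characteristic polynomial of φ restricted to Mᵢ. Then the map e ↦ (e(χᵢ))ᵢ is a group isomorphism from the group G(M, φ) of q-Frobenius characters of (M, φ) onto the direct product ∏ᵢ {ω ∈ Kˣ : ω^{fᵢ(q)} = 1}. -/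
/-- The group of `q`-Frobenius characters of `(M, φ)`: group homomorphisms `e` from the
additive group `M` to the multiplicative group `Kˣ` satisfying `e (φ m) = e m ^ q`,
as a subgroup of the group `M → Kˣ` under pointwise multiplication. -/
def frobeniusCharGroup {M : Type*} [AddCommGroup M]
    (K : Type*) [Field K] (q : ℕ) (φ : M ≃ₗ[ℤ] M) : Subgroup (M → Kˣ) where
  carrier := {e | (∀ a b, e (a + b) = e a * e b) ∧ ∀ m, e (φ m) = e m ^ q}
  mul_mem' := by
    rintro a b ⟨ha1, ha2⟩ ⟨hb1, hb2⟩
    refine ⟨fun x y => ?_, fun m => ?_⟩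
    · simp only [Pi.mul_apply, ha1 x y, hb1 x y]
      exact mul_mul_mul_comm _ _ _ _
    · simp only [Pi.mul_apply, ha2 m, hb2 m, mul_pow]
  one_mem' := ⟨fun _ _ => (one_mul 1).symm, fun _ => (one_pow q).symm⟩
  inv_mem' := by
    rintro a ⟨ha1, ha2⟩
    refine ⟨fun x y => ?_, fun m => ?_⟩
    · simp only [Pi.inv_apply, ha1 x y, mul_inv]
    · simp only [Pi.inv_apply, ha2 m, inv_pow]

/-- The group `{ω ∈ Kˣ : ω ^ n = 1}` of `n`-th roots of unity in `K`, for `n : ℤ`. -/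
def zpowOneSubgroup (K : Type*) [Field K] (n : ℤ) : Subgroup Kˣ where
  carrier := {ω | ω ^ n = 1}
  mul_mem' := by
    intro a b ha hb
    simp only [Set.mem_setOf_eq] at *
    rw [mul_zpow, ha, hb, one_mul]
  one_mem' := one_zpow n
  inv_mem' := by
    intro a ha
    simp only [Set.mem_setOf_eq] at *
    rw [inv_zpow, ha, inv_one]

open Polynomial in
lemma fc_aeval {M B : Type*} [AddCommGroup M] [AddCommGroup B] (A : M →ₗ[ℤ] M) (q : ℤ)
    (E : M →+ B) (hE : ∀ m, E (A m) = q • E m) (g : ℤ[X]) (m : M) :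
    E (aeval A g m) = g.eval q • E m := by
  have hpow : ∀ n : ℕ, E ((A ^ n) m) = q ^ n • E m := by
    intro n
    induction n with
    | zero => simp
    | succ n ih => rw [pow_succ', Module.End.mul_apply, hE, ih, smul_smul, pow_succ']
  induction g using Polynomial.induction_on' with
  | add a b ha hb => simp [ha, hb, add_smul]
  | monomial n c =>
    rw [aeval_monomial, eval_monomial, Module.End.mul_apply, Module.algebraMap_end_apply,
      map_zsmul, hpow, smul_smul]

open Polynomial in
lemma fc_inv {M : Type*} [AddCommGroup M] [Module.Free ℤ M] [Module.Finite ℤ M]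
    (φ : M ≃ₗ[ℤ] M) : ∃ p : ℤ[X], ∀ x, φ.symm x = aeval φ.toLinearMap p x := by
  set f := LinearMap.charpoly φ.toLinearMap with hf
  have hu : IsUnit (f.coeff 0) := by
    have h1 : IsUnit (LinearMap.det φ.toLinearMap) := φ.isUnit_det'
    rw [LinearMap.det_eq_sign_charpoly_coeff] at h1
    exact isUnit_of_mul_isUnit_right h1
  obtain ⟨u, hu⟩ := hu
  refine ⟨C (-(↑u⁻¹ : ℤ)) * f.divX, fun x => ?_⟩
  rw [LinearEquiv.symm_apply_eq]
  have h := LinearMap.congr_fun (LinearMap.aeval_self_charpoly φ.toLinearMap) x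
  rw [← hf, ← X_mul_divX_add f, map_add, map_mul, aeval_X, aeval_C, ← hu] at h
  simp only [LinearMap.add_apply, Module.End.mul_apply, Module.algebraMap_end_apply,
    LinearMap.zero_apply, LinearEquiv.coe_coe] at h
  rw [map_mul, aeval_C, Module.End.mul_apply, Module.algebraMap_end_apply, map_smul,
    eq_neg_of_add_eq_zero_left h, smul_neg, neg_smul, neg_neg, smul_smul]
  simp

open Polynomial in
lemma fc_zpow {M : Type*} [AddCommGroup M] [Module.Free ℤ M] [Module.Finite ℤ M]
    (φ : M ≃ₗ[ℤ] M) (n : ℤ) : ∃ p : ℤ[X], ∀ x, (φ ^ n) x = aeval φ.toLinearMap p x := by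
  obtain ⟨p, hp⟩ := fc_inv φ
  induction n using Int.induction_on with
  | zero => exact ⟨1, fun x => by simp⟩
  | succ n ih =>
    obtain ⟨r, hr⟩ := ih
    refine ⟨r * X, fun x => ?_⟩
    rw [zpow_add_one, LinearEquiv.mul_apply, hr]
    simp
  | pred n ih =>
    obtain ⟨r, hr⟩ := ih
    refine ⟨r * p, fun x => ?_⟩
    rw [zpow_sub_one, LinearEquiv.mul_apply, hr, map_mul, Module.End.mul_apply, ← hp]
    rfl

open Polynomial in
lemma fc_restrict {M : Type*} [AddCommGroup M] (A : M →ₗ[ℤ] M) (N : Submodule ℤ M)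
    (h : ∀ x ∈ N, A x ∈ N) (g : ℤ[X]) (x : N) :
    ((aeval (A.restrict h) g x : N) : M) = aeval A g (x : M) := by
  have hpow : ∀ n : ℕ, (((A.restrict h ^ n) x : N) : M) = (A ^ n) (x : M) := by
    intro n
    induction n with
    | zero => simp
    | succ n ih => rw [pow_succ', Module.End.mul_apply, LinearMap.coe_restrict_apply, ih,
        pow_succ', Module.End.mul_apply]
  induction g using Polynomial.induction_on' with
  | add a b ha hb => simp [ha, hb]
  | monomial n c =>
    simp only [aeval_monomial, Module.End.mul_apply, Module.algebraMap_end_apply]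
    rw [Submodule.coe_smul, hpow]

open Polynomial in
lemma fc_dvd {L : Type*} [AddCommGroup L] [Module.Free ℤ L] [Module.Finite ℤ L]
    (A : L →ₗ[ℤ] L) (v : L) (hv : ∀ x, ∃ g : ℤ[X], aeval A g v = x) (g : ℤ[X])
    (hg : aeval A g v = 0) : A.charpoly ∣ g := by
  have hmon := A.charpoly_monic
  have hmod : ∀ g : ℤ[X], aeval A (g %ₘ A.charpoly) v = aeval A g v := by
    intro g
    conv_rhs => rw [← modByMonic_add_div g A.charpoly]
    simp [LinearMap.aeval_self_charpoly]
  set d := A.charpoly.natDegree with hd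
  have hmem : ∀ g : ℤ[X], g %ₘ A.charpoly ∈ degreeLT ℤ d := by
    intro g
    rw [mem_degreeLT, hd, ← degree_eq_natDegree hmon.ne_zero]
    exact degree_modByMonic_lt g hmon
  let T : degreeLT ℤ d →ₗ[ℤ] L :=
    ((LinearMap.applyₗ v).comp (aeval A).toLinearMap).comp (degreeLT ℤ d).subtype
  have hT : ∀ p, T p = aeval A (p : ℤ[X]) v := fun p => rfl
  have hsurj : Function.Surjective T := by
    intro x
    obtain ⟨g, rfl⟩ := hv x
    exact ⟨⟨_, hmem g⟩, hmod g⟩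
  have hrank : Module.finrank ℤ L = d := (LinearMap.charpoly_natDegree A).symm
  let b := (Module.finBasisOfFinrankEq ℤ L hrank).equivFun
  let j : L ≃ₗ[ℤ] degreeLT ℤ d := b.trans (degreeLTEquiv ℤ d).symm
  have hinj : Function.Injective T :=
    OrzechProperty.injective_of_surjective_of_injective j.symm.toLinearMap T j.symm.injective hsurj
  rw [← modByMonic_eq_zero_iff_dvd hmon]
  have : (⟨_, hmem g⟩ : degreeLT ℤ d) = 0 := hinj (by rw [map_zero, hT]; exact (hmod g).trans hg)
  exact congrArg Subtype.val this

open Polynomial in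
lemma fc_exists {L B : Type*} [AddCommGroup L] [Module.Free ℤ L] [Module.Finite ℤ L]
    [AddCommGroup B] (A : L →ₗ[ℤ] L) (v : L) (hv : ∀ x, ∃ g : ℤ[X], aeval A g v = x)
    (q : ℤ) (w : B) (hw : A.charpoly.eval q • w = 0) :
    ∃ E : L →+ B, E v = w ∧ ∀ x, E (A x) = q • E x := by
  choose s hs using hv
  have key : ∀ g h : ℤ[X], aeval A g v = aeval A h v → g.eval q • w = h.eval q • w := by
    intro g h hgh
    obtain ⟨c, hc⟩ := fc_dvd A v (fun x => ⟨s x, hs x⟩) (g - h) (by simp [hgh])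
    rw [← sub_eq_zero, ← sub_smul, ← eval_sub, hc, eval_mul, mul_comm, mul_smul, hw, smul_zero]
  refine ⟨AddMonoidHom.mk' (fun x => (s x).eval q • w) ?_, ?_, ?_⟩
  · intro a b
    rw [← add_smul, ← eval_add]
    exact key _ _ (by simp [hs])
  · have := key (s v) 1 (by simp [hs])
    simpa using this
  · intro x
    have := key (s (A x)) (X * s x) (by simp [hs])
    simpa [mul_smul] using this

/-- Let `k` be a finite field with `q` elements and `K` an algebraic closure of `k`.
Let `M` be a free `ℤ`-module of finite rank with a `ℤ`-linear automorphism `φ`, and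
suppose `M` is the internal direct sum of `φ`-invariant submodules `N i`, each principal
with generator `χ i`.  Let `f i` be the characteristic polynomial of `φ` restricted to
`N i`.  Then `e ↦ (e (χ i))ᵢ` is a group isomorphism from the group of `q`-Frobenius
characters of `(M, φ)` onto the product of the groups of `fᵢ(q)`-th roots of unity in `K`. -/
theorem frobeniusCharGroup_equiv_pi_rootsOfUnity
    (k : Type*) [Field k] [Fintype k] (K : Type*) [Field K] [Algebra k K] [IsAlgClosure k K]
    (q : ℕ) (hq : Fintype.card k = q)
    (M : Type*) [AddCommGroup M] [Module.Free ℤ M] [Module.Finite ℤ M]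
    (φ : M ≃ₗ[ℤ] M)
    (ι : Type*) [Fintype ι] [DecidableEq ι] (N : ι → Submodule ℤ M)
    (hdecomp : DirectSum.IsInternal N)
    (hinv : ∀ i, ∀ x ∈ N i, φ x ∈ N i)
    (χ : ι → M) (hχmem : ∀ i, χ i ∈ N i)
    (hχ : ∀ i, Submodule.span ℤ (Set.range fun n : ℤ => (φ ^ n) (χ i)) = N i)
    (f : ι → Polynomial ℤ)
    (hf : ∀ i, f i = LinearMap.charpoly (φ.toLinearMap.restrict (hinv i))) :
    ∃ ψ : frobeniusCharGroup K q φ ≃* (∀ i, zpowOneSubgroup K ((f i).eval (q : ℤ))),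
      ∀ (e : frobeniusCharGroup K q φ) (i : ι), (ψ e i : Kˣ) = (e : M → Kˣ) (χ i) := by
  classical
  have hgen : ∀ i, ∀ x ∈ N i, ∃ g : Polynomial ℤ,
      Polynomial.aeval φ.toLinearMap g (χ i) = x := by
    intro i x hx
    rw [← hχ i] at hx
    induction hx using Submodule.span_induction with
    | mem x hx =>
      obtain ⟨n, rfl⟩ := hx
      obtain ⟨p, hp⟩ := fc_zpow φ n
      exact ⟨p, (hp _).symm⟩
    | zero => exact ⟨0, by simp⟩
    | add x y _ _ hx hy =>
      obtain ⟨a, rfl⟩ := hx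
      obtain ⟨b, rfl⟩ := hy
      exact ⟨a + b, by simp⟩
    | smul c x _ hx =>
      obtain ⟨a, rfl⟩ := hx
      exact ⟨c • a, by rw [map_smul, LinearMap.smul_apply]⟩
  have htop : ∀ x : M, x ∈ ⨆ i, N i := by
    intro x
    rw [hdecomp.submodule_iSup_eq_top]
    trivial
  let toHom : frobeniusCharGroup K q φ → (M →+ Additive Kˣ) := fun e =>
    AddMonoidHom.mk' (fun m => Additive.ofMul ((e : M → Kˣ) m)) (fun a b => by
      rw [e.2.1 a b]; rfl)
  have htoHom : ∀ e m, toHom e m = Additive.ofMul ((e : M → Kˣ) m) := fun e m => rfl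
  have hFrob : ∀ e m, toHom e (φ.toLinearMap m) = (q : ℤ) • toHom e m := by
    intro e m
    rw [htoHom, htoHom, LinearEquiv.coe_coe, e.2.2 m, natCast_zsmul]
    rfl
  have hroot : ∀ (e : frobeniusCharGroup K q φ) i,
      (e : M → Kˣ) (χ i) ∈ zpowOneSubgroup K ((f i).eval (q : ℤ)) := by
    intro e i
    have h1 := fc_aeval φ.toLinearMap q (toHom e) (hFrob e) (f i) (χ i)
    have h2 := fc_restrict φ.toLinearMap (N i) (hinv i) (f i) ⟨χ i, hχmem i⟩
    rw [hf i, LinearMap.aeval_self_charpoly, ← hf i] at h2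
    rw [← h2] at h1
    simp only [LinearMap.zero_apply, ZeroMemClass.coe_zero, map_zero] at h1
    exact congrArg Additive.toMul h1.symm
  let F : frobeniusCharGroup K q φ →* (∀ i, zpowOneSubgroup K ((f i).eval (q : ℤ))) :=
    { toFun := fun e i => ⟨(e : M → Kˣ) (χ i), hroot e i⟩
      map_one' := rfl
      map_mul' := fun _ _ => rfl }
  have hFinj : Function.Injective F := by
    intro a b hab
    have hχab : ∀ i, toHom a (χ i) = toHom b (χ i) := fun i =>
      congrArg (fun t => Additive.ofMul ((t i : Kˣ))) hab
    apply Subtype.ext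
    funext m
    suffices h : toHom a m = toHom b m from congrArg Additive.toMul h
    induction htop m using Submodule.iSup_induction' with
    | mem i x hx =>
      obtain ⟨g, rfl⟩ := hgen i x hx
      rw [fc_aeval _ q _ (hFrob a), fc_aeval _ q _ (hFrob b), hχab]
    | zero => simp
    | add x y _ _ hx hy => rw [map_add, map_add, hx, hy]
  have hFsurj : Function.Surjective F := by
    intro w
    have hE : ∀ i, ∃ E : N i →+ Additive Kˣ, E ⟨χ i, hχmem i⟩ = Additive.ofMul (w i : Kˣ) ∧
        ∀ x, E (φ.toLinearMap.restrict (hinv i) x) = (q : ℤ) • E x := by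
      intro i
      refine fc_exists _ _ ?_ _ _ ?_
      · intro x
        obtain ⟨g, hg⟩ := hgen i x x.2
        exact ⟨g, Subtype.ext (by rw [fc_restrict]; exact hg)⟩
      · rw [← hf i]
        exact congrArg Additive.ofMul (w i).2
    choose E hE1 hE2 using hE
    let c := AddEquiv.ofBijective (DirectSum.coeAddMonoidHom N) hdecomp
    let T : M →+ Additive Kˣ := (DirectSum.toAddMonoid E).comp c.symm.toAddMonoidHom
    have hT : ∀ i (x : N i), T x = E i x := by
      intro i x
      have : c.symm (x : M) = DirectSum.of (fun i => N i) i x := by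
        rw [AddEquiv.symm_apply_eq]
        exact (DirectSum.coeAddMonoidHom_of N i x).symm
      change DirectSum.toAddMonoid E (c.symm (x : M)) = _
      rw [this, DirectSum.toAddMonoid_of]
    have hTφ : ∀ m, T (φ m) = (q : ℤ) • T m := by
      intro m
      induction htop m using Submodule.iSup_induction' with
      | mem i x hx =>
        have h := hE2 i ⟨x, hx⟩
        rw [← hT, ← hT] at h
        exact h
      | zero => simp
      | add x y _ _ hx hy => rw [map_add, map_add, map_add, hx, hy, zsmul_add]
    refine ⟨⟨fun m => (T m).toMul, fun a b => ?_, fun m => ?_⟩, ?_⟩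
    · exact congrArg Additive.toMul (map_add T a b)
    · change (T (φ m)).toMul = _
      rw [hTφ, natCast_zsmul]; rfl
    · funext i
      apply Subtype.ext
      change (T (χ i)).toMul = _
      have h := hT i ⟨χ i, hχmem i⟩
      rw [hE1] at h
      exact congrArg Additive.toMul h
  exact ⟨MulEquiv.ofBijective F ⟨hFinj, hFsurj⟩, fun e i => rfl⟩
end

section
/- Let k be a finite field with q elements and K an algebraic closure of k. Let M be a free ℤ-module of finite rank with a ℤ-linear automorphism φ, and suppose M decomposes as a finite direct sum of φ-invariant submodules each of which is principal for φ. Let f ∈ ℤ[x] be the characteristic polynomial of φ. Then the group G(M, φ) of q-Frobenius characters of (M, φ) is finite of cardinality |f(q)|, the absolute value of f evaluated at q. -/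
/-- Let `k` be a finite field with `q` elements and `K` an algebraic closure of `k`.
Let `M` be a free `ℤ`-module of finite rank with a `ℤ`-linear automorphism `φ`, and
suppose `M` is the internal direct sum of `φ`-invariant submodules each of which is
principal for `φ`.  Let `f` be the characteristic polynomial of `φ`.  Then the group of
`q`-Frobenius characters of `(M, φ)` is finite of cardinality `|f(q)|`. -/
theorem card_frobeniusCharGroup_eq_charpoly_eval
    (k : Type*) [Field k] [Fintype k] (K : Type*) [Field K] [Algebra k K] [IsAlgClosure k K]
    (q : ℕ) (hq : Fintype.card k = q)
    (M : Type*) [AddCommGroup M] [Module.Free ℤ M] [Module.Finite ℤ M]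
    (φ : M ≃ₗ[ℤ] M)
    (ι : Type*) [Fintype ι] [DecidableEq ι] (N : ι → Submodule ℤ M)
    (hdecomp : DirectSum.IsInternal N)
    (hinv : ∀ i, ∀ x ∈ N i, φ x ∈ N i)
    (hprin : ∀ i, ∃ χ ∈ N i,
      Submodule.span ℤ (Set.range fun n : ℤ => (φ ^ n) χ) = N i)
    (f : Polynomial ℤ) (hf : f = LinearMap.charpoly φ.toLinearMap) :
    Finite (frobeniusCharGroup K q φ) ∧
      Nat.card (frobeniusCharGroup K q φ) = (f.eval (q : ℤ)).natAbs := by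
  have hqK : (q : K) = 0 := by
    rw [← hq, ← map_natCast (algebraMap k K), FiniteField.cast_card_eq_zero, map_zero]
  have hf0 : IsUnit (f.eval 0) := by
    rw [hf, LinearMap.eval_charpoly, map_zero, zero_sub]
    exact LinearMap.isUnit_det _ ((Module.End.isUnit_iff _).2 φ.bijective).neg
  have hdK : ((f.eval (q : ℤ) : ℤ) : K) ≠ 0 := by
    obtain ⟨c, hc⟩ := Polynomial.sub_dvd_eval_sub (q : ℤ) 0 f
    have h1 : f.eval (q : ℤ) = f.eval 0 + q * c := by linear_combination hc
    rw [h1]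
    push_cast
    rw [hqK, zero_mul, add_zero]
    exact (hf0.map (Int.castRingHom K)).ne_zero
  have hd : f.eval (q : ℤ) ≠ 0 := by
    intro h
    rw [h] at hdK
    simp at hdK
  set L : M →ₗ[ℤ] M := algebraMap ℤ (Module.End ℤ M) q - φ.toLinearMap with hL
  have hLa : ∀ m, L m = q • m - φ m := by
    intro m
    simp [hL]
  have hdet : LinearMap.det L = f.eval (q : ℤ) := by
    rw [hf, LinearMap.eval_charpoly]
  have hinj : Function.Injective L := by
    rw [← LinearMap.ker_eq_bot]
    by_contra h
    exact hd (hdet ▸ LinearMap.det_eq_zero_iff_ker_ne_bot.2 h)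
  have hcard : Nat.card (M ⧸ LinearMap.range L) = (f.eval (q : ℤ)).natAbs := by
    rw [← Submodule.natAbs_det_equiv (LinearMap.range L) (LinearEquiv.ofInjective L hinj), ← hdet]
    rfl
  have hne : Nat.card (M ⧸ LinearMap.range L) ≠ 0 := by
    rw [hcard]; exact Int.natAbs_ne_zero.2 hd
  have hcardK : ((Nat.card (Multiplicative (M ⧸ LinearMap.range L)) : ℕ) : K) ≠ 0 := by
    rw [Nat.card_congr Multiplicative.toAdd, hcard]
    rcases Int.natAbs_eq (f.eval (q : ℤ)) with h | h <;> rw [h] at hdK <;> simpa using hdK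
  have : Finite (M ⧸ LinearMap.range L) := Nat.finite_of_card_ne_zero hne
  have : Finite (Multiplicative (M ⧸ LinearMap.range L)) := ‹_›
  have : IsAlgClosed K := IsAlgClosure.isAlgClosed k
  have : NeZero ((Nat.card (Multiplicative (M ⧸ LinearMap.range L)) : ℕ) : K) := ⟨hcardK⟩
  have : NeZero (Nat.card (Multiplicative (M ⧸ LinearMap.range L))) := ⟨Nat.card_pos.ne'⟩
  have h1 : HasEnoughRootsOfUnity K (Nat.card (Multiplicative (M ⧸ LinearMap.range L))) :=
    inferInstance
  have : HasEnoughRootsOfUnity K (Monoid.exponent (Multiplicative (M ⧸ LinearMap.range L))) :=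
    h1.of_dvd K Group.exponent_dvd_nat_card
  have hdual := CommGroup.card_monoidHom_of_hasEnoughRootsOfUnity
    (Multiplicative (M ⧸ LinearMap.range L)) K
  rw [Nat.card_congr Multiplicative.toAdd, hcard] at hdual
  let F : (Multiplicative (M ⧸ LinearMap.range L) →* Kˣ) → frobeniusCharGroup K q φ := fun g =>
    ⟨fun m => g (Multiplicative.ofAdd (Submodule.Quotient.mk m)), by
      refine ⟨fun a b => ?_, fun m => ?_⟩
      · dsimp only
        rw [Submodule.Quotient.mk_add, ofAdd_add, map_mul]
      · dsimp only
        rw [← map_pow, ← ofAdd_nsmul, ← Submodule.Quotient.mk_smul]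
        have hmem : q • m - φ m ∈ LinearMap.range L := ⟨m, hLa m⟩
        rw [(Submodule.Quotient.eq _).2 hmem]⟩
  have hF : Function.Bijective F := by
    constructor
    · intro g g' h
      refine MonoidHom.ext fun x => ?_
      obtain ⟨m, hm⟩ := Submodule.Quotient.mk_surjective _ (Multiplicative.toAdd x)
      have := congrFun (congrArg Subtype.val h) m
      simp only [F, hm] at this
      exact this
    · rintro ⟨e, he1, he2⟩
      let E : M →+ Additive Kˣ := AddMonoidHom.mk' (fun m => Additive.ofMul (e m)) (by
        intro a b; rw [he1, ofMul_mul])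
      have hE : LinearMap.range L ≤ LinearMap.ker E.toIntLinearMap := by
        rintro _ ⟨m, rfl⟩
        rw [LinearMap.mem_ker, hLa, map_sub, map_nsmul, sub_eq_zero]
        change q • Additive.ofMul (e m) = Additive.ofMul (e (φ m))
        rw [he2, ofMul_pow]
      let g := ((LinearMap.range L).liftQ E.toIntLinearMap hE).toAddMonoidHom
      refine ⟨AddMonoidHom.toMultiplicativeLeft g, ?_⟩
      rfl
  have hc : Nat.card (frobeniusCharGroup K q φ) = (f.eval (q : ℤ)).natAbs := by
    rw [← hdual]
    exact (Nat.card_congr (Equiv.ofBijective F hF)).symm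
  refine ⟨Nat.finite_of_card_ne_zero ?_, hc⟩
  rw [hc]
  exact Int.natAbs_ne_zero.2 hd
end
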